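/- For every n=(n₁,n₂,n₃)∈ℤ³ with all nᵢ≥1, the polynomial space V_n spanned by the restrictions to a triangle △ of G of the box spline translates active on △ has dimension dim V_n = n₁n₂ + n₁n₃ + n₂n₃. -/

import Mathlib

/- ## The three-directional (type-I) grid -/

noncomputable section

open MvPolynomial Set Function

/-- Points of the plane. -/
abbrev Pt := ℝ × ℝ

/-- Bivariate real polynomials `ℝ[x,y]`. -/
abbrev BPoly := MvPolynomial (Fin 2) ℝ

/-- Evaluation of a bivariate polynomial at a point of the plane. -/
def evalP (q : BPoly) (p : Pt) : ℝ := MvPolynomial.eval ![p.1, p.2] q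

/-- Triangles of the three-directional grid `G`:  `⟨v, false⟩` is the "lower"
triangle with vertices `v, v+(1,0), v+(1,1)`, and `⟨v, true⟩` is the "upper"
triangle with vertices `v, v+(0,1), v+(1,1)`. -/
structure Tri where
  v : ℤ × ℤ
  up : Bool
deriving DecidableEq

namespace Tri

/-- The open triangle in the plane realizing a combinatorial triangle. -/
def toSet (T : Tri) : Set Pt :=
  if T.up then
    {p | (T.v.1 : ℝ) < p.1 ∧ p.1 - (T.v.1 : ℝ) < p.2 - (T.v.2 : ℝ) ∧ p.2 < (T.v.2 : ℝ) + 1}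
  else
    {p | (T.v.2 : ℝ) < p.2 ∧ p.2 - (T.v.2 : ℝ) < p.1 - (T.v.1 : ℝ) ∧ p.1 < (T.v.1 : ℝ) + 1}

/-- The closed triangle. -/
def cl (T : Tri) : Set Pt := closure T.toSet

/-- The three lattice vertices of a triangle. -/
def vertices (T : Tri) : Finset (ℤ × ℤ) :=
  if T.up then {T.v, (T.v.1, T.v.2 + 1), (T.v.1 + 1, T.v.2 + 1)}
  else {T.v, (T.v.1 + 1, T.v.2), (T.v.1 + 1, T.v.2 + 1)}

end Tri

/-- Edges of the grid: a lattice point together with a direction type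
(`0 ↦ e₁ = (1,0)`, `1 ↦ e₂ = (0,1)`, `2 ↦ e₃ = (1,1)`); the edge of type `i`
at `v` joins `v` to `v + eᵢ`. -/
abbrev Edge := (ℤ × ℤ) × Fin 3

/-- The three direction vectors `e₁, e₂, e₃`. -/
def dirZ : Fin 3 → ℤ × ℤ := ![(1, 0), (0, 1), (1, 1)]

/-- The three edges of a triangle. -/
def Tri.edges (T : Tri) : Finset Edge :=
  if T.up then {((T.v.1, T.v.2 + 1), 0), (T.v, 1), (T.v, 2)}
  else {(T.v, 0), ((T.v.1 + 1, T.v.2), 1), (T.v, 2)}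

/-- The open segment realizing an edge. -/
def Edge.seg (ε : Edge) : Set Pt :=
  {p | ∃ t : ℝ, 0 < t ∧ t < 1 ∧
    p = ((ε.1.1 : ℝ) + t * ((dirZ ε.2).1 : ℝ), (ε.1.2 : ℝ) + t * ((dirZ ε.2).2 : ℝ))}

/-- `M*`: the union of the closed triangles of a multicell domain. -/
def Mstar (M : Finset Tri) : Set Pt := ⋃ T ∈ M, T.cl

/-- `ℙ(M,V)`: continuous functions on `M*` whose restriction to each triangle
of `M` is the restriction of a polynomial in `V`. -/
def PP (M : Finset Tri) (V : Set BPoly) : Set (Pt → ℝ) :=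
  {f | ContinuousOn f (Mstar M) ∧ ∀ T ∈ M, ∃ q ∈ V, EqOn f (evalP q) T.toSet}

/-- The diamond of an edge: union of the closed triangles of `M` having `ε`
as an edge. -/
def diamond (M : Finset Tri) (ε : Edge) : Set Pt :=
  ⋃ T ∈ M.filter (fun T => ε ∈ T.edges), T.cl

/-- The spline space with edge smoothness `d` on the multicell domain `M`:
piecewise polynomials (pieces from `V`) which are `C^{dᵢ}` on the diamond of
every edge of type `i` of `M`. -/
def SplineSpace (M : Finset Tri) (V : Set BPoly) (d : Fin 3 → ℕ) : Set (Pt → ℝ) :=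
  {f | f ∈ PP M V ∧
    ∀ ε : Edge, (∃ T ∈ M, ε ∈ T.edges) → ContDiffOn ℝ (d ε.2) f (diamond M ε)}

/-- Directional derivative of a polynomial along an integer vector. -/
def dirD (e : ℤ × ℤ) (q : BPoly) : BPoly :=
  (e.1 : ℝ) • MvPolynomial.pderiv (0 : Fin 2) q + (e.2 : ℝ) • MvPolynomial.pderiv (1 : Fin 2) q

/-- The mixed directional derivative operator
`D_s = (∂_{e₁})^{s₁} (∂_{e₂})^{s₂} (∂_{e₃})^{s₃}`. -/
def Dmix (s : Fin 3 → ℕ) (q : BPoly) : BPoly :=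
  (dirD (dirZ 0))^[s 0] ((dirD (dirZ 1))^[s 1] ((dirD (dirZ 2))^[s 2] q))

/-- The index sets `Iᵢ^d`; `I₁^d = {s | s₂+s₃ ≤ d₁}` and cyclically. -/
def Iset (d : Fin 3 → ℕ) (i : Fin 3) : Set (Fin 3 → ℕ) :=
  {s | s (i + 1) + s (i + 2) ≤ d i}

/-- Two triangles of the grid are adjacent if they are distinct and share an edge. -/
def Adj (T T' : Tri) : Prop := T ≠ T' ∧ ∃ ε : Edge, ε ∈ T.edges ∧ ε ∈ T'.edges

/-- `c` is an edge-connected chain of length `m` from `T` to `T'`. -/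
def TriIsChain (T T' : Tri) (m : ℕ) (c : ℕ → Tri) : Prop :=
  c 0 = T ∧ c m = T' ∧ ∀ k < m, Adj (c k) (c (k + 1))

/-- The set of types of the edges crossed by a chain. -/
def chainTypes (m : ℕ) (c : ℕ → Tri) : Set (Fin 3) :=
  {i | ∃ k < m, ∃ ε : Edge, ε.2 = i ∧ ε ∈ (c k).edges ∧ ε ∈ (c (k + 1)).edges}

/-- Minimal length of an edge-connected chain between two triangles. -/
def minLen (T T' : Tri) : ℕ := sInf {m | ∃ c, TriIsChain T T' m c}

/-- The smoothness type `SmType(△,△')`: the types of the edges crossed by a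
shortest edge-connected chain from `△` to `△'`. -/
def SmType (T T' : Tri) : Set (Fin 3) :=
  {i | ∃ c, TriIsChain T T' (minLen T T') c ∧ i ∈ chainTypes (minLen T T') c}

/-- `q` is the polynomial piece of `f` on the triangle `T`. -/
def IsPiece (f : Pt → ℝ) (T : Tri) (q : BPoly) : Prop := EqOn f (evalP q) T.toSet

/-- The strongly regular spline space `Ŝ^d(M,V)`: piecewise polynomials such
that for any two triangles of `M` with intersecting closures, the derivatives
`D_s`, `s ∈ ⋂_{i ∈ SmType(△,△')} Iᵢ^d`, of the two polynomial pieces agree on the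
intersection of the closures (i.e. `D_s f` is continuous there). -/
def StrongSpline (M : Finset Tri) (V : Set BPoly) (d : Fin 3 → ℕ) : Set (Pt → ℝ) :=
  {f | f ∈ PP M V ∧
    ∀ T ∈ M, ∀ T' ∈ M, (T.cl ∩ T'.cl).Nonempty →
      ∀ s : Fin 3 → ℕ, (∀ i ∈ SmType T T', s ∈ Iset d i) →
        ∀ q q' : BPoly, IsPiece f T q → IsPiece f T' q' →
          ∀ x ∈ T.cl ∩ T'.cl, evalP (Dmix s q) x = evalP (Dmix s q') x}

/-- Kissing triangles: the closures intersect in exactly one point. -/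
def Kissing (T T' : Tri) : Prop := ∃ p : Pt, T.cl ∩ T'.cl = {p}

/-- An over-concave vertex of `M`: exactly one triangle of `star(ν)` is
missing from `M`. -/
def OverConcave (M : Finset Tri) (ν : ℤ × ℤ) : Prop :=
  ∃! T : Tri, ν ∈ T.vertices ∧ T ∉ M

/- ## Type-I box splines -/

/-- The Courant hat function `B_{(1,1,1)}`: the piecewise linear function on
`G` supported on `star((1,1))` with value `1` at `(1,1)` and `0` at all other
lattice points. -/
def hat (p : Pt) : ℝ :=
  max 0 (min (min (min p.1 p.2) (min (2 - p.1) (2 - p.2)))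
             (min (1 - (p.1 - p.2)) (1 + (p.1 - p.2))))

/-- The type-I box spline `B_{(n₁,n₂,n₃)}`, defined by repeated directional
convolution starting from the Courant hat function (the result is independent
of the order of the convolutions); junk value `0` if some `nᵢ = 0`. -/
noncomputable def boxN : ℕ → ℕ → ℕ → Pt → ℝ
  | 0, _, _, _ => 0
  | _ + 1, 0, _, _ => 0
  | _ + 1, _ + 1, 0, _ => 0
  | 1, 1, 1, p => hat p
  | a + 2, b + 1, c + 1, p =>
      ∫ t in (0:ℝ)..1, boxN (a + 1) (b + 1) (c + 1) (p.1 - t, p.2)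
  | 1, b + 2, c + 1, p =>
      ∫ t in (0:ℝ)..1, boxN 1 (b + 1) (c + 1) (p.1, p.2 - t)
  | 1, 1, c + 2, p =>
      ∫ t in (0:ℝ)..1, boxN 1 1 (c + 1) (p.1 - t, p.2 - t)
  termination_by a b c _ => a + b + c
  decreasing_by all_goals omega

/-- The translate `B_n(· - w)` of the box spline. -/
def trBox (n₁ n₂ n₃ : ℕ) (w : ℤ × ℤ) (p : Pt) : ℝ :=
  boxN n₁ n₂ n₃ (p.1 - (w.1 : ℝ), p.2 - (w.2 : ℝ))

/-- `Supp_n(△̂)`: lattice translates of `B_n` that do not vanish identically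
on the triangle `T`. -/
def activeSet (n₁ n₂ n₃ : ℕ) (T : Tri) : Set (ℤ × ℤ) :=
  {w | ¬ ∀ p ∈ T.toSet, trBox n₁ n₂ n₃ w p = 0}

/-- `c` is the coefficient vector of the polynomial `q` with respect to the
active box-spline translates on `T`:  `q|_T = Σ_β λ_T^β(q)·β|_T`. -/
def Represents (n₁ n₂ n₃ : ℕ) (T : Tri) (q : BPoly) (c : (ℤ × ℤ) →₀ ℝ) : Prop :=
  ↑c.support ⊆ activeSet n₁ n₂ n₃ T ∧
    ∀ p ∈ T.toSet, evalP q p = c.sum fun w a => a * trBox n₁ n₂ n₃ w p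

/-- `V_n` (relative to the triangle `T`): polynomials whose restriction to `T`
is a linear combination of the active box-spline translates on `T`. -/
def VSpace (n₁ n₂ n₃ : ℕ) (T : Tri) : Set BPoly :=
  {q | ∃ c, Represents n₁ n₂ n₃ T q c}

/-!
Suppose that `∑ c w • B (· - w)` vanishes on a triangle, where `B` is the convolution of a smaller
box spline with the unit segment in the direction `e`. Differentiating along `e` gives a relation
between translates of the smaller box spline with coefficients `c w - c (w - e)`, so by induction
`c` is constant along each line of active indices parallel to `e`. Summing the translates of `B`
along such a line yields a translate of a univariate cardinal B-spline in a coordinate transverse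
to `e`. Those are locally linearly independent, by the same differentiation argument in dimension
one, and hence `c = 0`. The dimension is therefore the number of active translates. These are the
lattice points of a translated zonotope, which is tiled by one parallelogram for each pair of
directions.
-/

section LineSums

variable {E : Type*} [AddCommGroup E] [TopologicalSpace E]

/-- The sum of the translates of `B` along the integer multiples of `e` is `g`. Locally uniform
finiteness is built in, so that such sums commute with `dirConv`. -/
def HasLineSum (e : E) (B g : E → ℝ) : Prop :=
  ∀ K : Set E, IsCompact K → ∀ᶠ S : Finset ℤ in Filter.atTop,
    ∀ p ∈ K, ∑ j ∈ S, B (p - j • e) = g p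

lemma hasLineSum_of_two_terms {e : E} {B g : E → ℝ} {π : E → ℝ} (hπ : Continuous π)
    (hπe : ∀ p (j : ℤ), π (p - j • e) = π p - j) (hB : ∀ p, B p ≠ 0 → 0 < π p ∧ π p < 2)
    (hg : ∀ p (j : ℤ), g (p - j • e) = g p)
    (hsum : ∀ p, 0 ≤ π p → π p < 1 → B p + B (p + e) = g p) : HasLineSum e B g := by
  intro K hK
  obtain ⟨m, hm⟩ := (hK.image hπ).bddBelow
  obtain ⟨M, hM⟩ := (hK.image hπ).bddAbove
  filter_upwards [Filter.eventually_ge_atTop (Finset.Icc (⌊m⌋ - 1) ⌊M⌋)] with S hS p hp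
  have hsub : {⌊π p⌋, ⌊π p⌋ - 1} ⊆ S := by
    have hlo : ⌊m⌋ ≤ ⌊π p⌋ := Int.floor_mono (hm (mem_image_of_mem π hp))
    have hhi : ⌊π p⌋ ≤ ⌊M⌋ := Int.floor_mono (hM (mem_image_of_mem π hp))
    refine subset_trans ?_ hS
    intro j hj
    simp only [Finset.mem_insert, Finset.mem_singleton] at hj
    rw [Finset.mem_Icc]
    omega
  rw [← Finset.sum_subset hsub, Finset.sum_pair (by omega), ← hg p ⌊π p⌋, ← hsum]
  · congr 2
    rw [sub_smul, one_smul]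
    abel
  · rw [hπe]
    linarith [Int.floor_le (π p)]
  · rw [hπe]
    linarith [Int.lt_floor_add_one (π p)]
  · intro j _ hj
    by_contra hne
    obtain ⟨hpos, hlt⟩ := hB _ hne
    rw [hπe] at hpos hlt
    have hle : j ≤ ⌊π p⌋ := Int.le_floor.2 (by linarith)
    have hgt : ⌊π p⌋ < j + 2 := Int.floor_lt.2 (by push_cast; linarith)
    simp only [Finset.mem_insert, Finset.mem_singleton] at hj
    omega

end LineSums

section DirectionalConvolution

variable {E : Type*} [NormedAddCommGroup E] [NormedSpace ℝ E]

/-- The convolution of `f` with the uniform distribution on the segment from `0` to `e`. One such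
convolution raises one index of a box spline by one. -/
def dirConv (e : E) (f : E → ℝ) (p : E) : ℝ :=
  ∫ t in (0 : ℝ)..1, f (p - t • e)

lemma continuous_dirConv (e : E) {f : E → ℝ} (hf : Continuous f) : Continuous (dirConv e f) :=
  intervalIntegral.continuous_parametric_intervalIntegral_of_continuous' (by fun_prop) 0 1

lemma exists_ne_zero_of_dirConv_ne_zero {e : E} {f : E → ℝ} {p : E} (h : dirConv e f p ≠ 0) :
    ∃ t ∈ Icc (0 : ℝ) 1, f (p - t • e) ≠ 0 := by
  contrapose! h
  rw [dirConv, intervalIntegral.integral_congr (g := fun _ ↦ 0), intervalIntegral.integral_zero]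
  intro t ht
  exact h t (by rwa [uIcc_of_le zero_le_one] at ht)

lemma dirConv_zero (f : E → ℝ) : dirConv 0 f = f := by
  ext p
  simp [dirConv]

lemma dirConv_neg (e : E) (f : E → ℝ) (p : E) : dirConv (-e) f p = dirConv e f (p + e) := by
  have h := intervalIntegral.integral_comp_sub_left (fun t : ℝ ↦ f (p + e - t • e)) (1 : ℝ)
    (a := 0) (b := 1)
  simp only [sub_self, sub_zero] at h
  rw [dirConv, dirConv, ← h]
  refine intervalIntegral.integral_congr fun t _ ↦ ?_
  congr 1
  module

lemma dirConv_comp {F : Type*} [NormedAddCommGroup F] [NormedSpace ℝ F] {e : E} {e' : F}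
    {φ : E → F} (hφ : ∀ p (t : ℝ), φ (p - t • e) = φ p - t • e') (f : F → ℝ) :
    dirConv e (fun p ↦ f (φ p)) = fun p ↦ dirConv e' f (φ p) := by
  ext p
  simp only [dirConv, hφ]

lemma hasDerivAt_dirConv_line (e : E) {f : E → ℝ} (hf : Continuous f) (p : E) :
    HasDerivAt (fun s : ℝ ↦ dirConv e f (p + s • e)) (f p - f (p - e)) 0 := by
  have hline : Continuous fun u : ℝ ↦ f (p + u • e) := by fun_prop
  have hsplit : (fun s : ℝ ↦ dirConv e f (p + s • e)) =
      fun s ↦ (∫ u in (0 : ℝ)..s, f (p + u • e)) - ∫ u in (0 : ℝ)..s - 1, f (p + u • e) := by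
    ext s
    rw [intervalIntegral.integral_interval_sub_left (hline.intervalIntegrable _ _)
      (hline.intervalIntegrable _ _)]
    have h := intervalIntegral.integral_comp_sub_left (fun u : ℝ ↦ f (p + u • e)) s
      (a := 0) (b := 1)
    rw [sub_zero] at h
    rw [← h, dirConv]
    refine intervalIntegral.integral_congr fun t _ ↦ ?_
    congr 1
    module
  rw [hsplit]
  have h₀ : HasDerivAt (fun s ↦ ∫ u in (0 : ℝ)..s, f (p + u • e)) (f (p + (0 : ℝ) • e)) 0 :=
    hline.integral_hasStrictDerivAt 0 0 |>.hasDerivAt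
  have h₁ : HasDerivAt (fun s : ℝ ↦ ∫ u in (0 : ℝ)..s - 1, f (p + u • e))
      (f (p + (0 - 1 : ℝ) • e)) 0 := by
    have h := (hline.integral_hasStrictDerivAt 0 (0 - 1)).hasDerivAt
    exact h.comp_sub_const 0 1
  convert h₀.sub h₁ using 2 <;> congr 1 <;> module

lemma HasLineSum.dirConv {e : E} {B g : E → ℝ} (h : HasLineSum e B g) (hB : Continuous B)
    (f : E) : HasLineSum e (dirConv f B) (dirConv f g) := by
  intro K hK
  have hcompact : IsCompact ((fun x : E × ℝ ↦ x.1 - x.2 • f) '' (K ×ˢ Icc 0 1)) :=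
    (hK.prod isCompact_Icc).image (by fun_prop)
  filter_upwards [h _ hcompact] with S hS p hp
  unfold _root_.dirConv
  rw [← intervalIntegral.integral_finsetSum
    fun j _ ↦ Continuous.intervalIntegrable (by fun_prop) 0 1]
  refine intervalIntegral.integral_congr fun t ht ↦ ?_
  rw [uIcc_of_le zero_le_one] at ht
  rw [← hS _ ⟨(p, t), ⟨hp, ht⟩, rfl⟩]
  refine Finset.sum_congr rfl fun j _ ↦ ?_
  rw [sub_right_comm]

end DirectionalConvolution

section LocalBases

lemma linearIndepOn_domRestrict_iff {κ X : Type*} {φ : κ → X → ℝ} {Ω : Set X} {A : Finset κ} :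
    LinearIndepOn ℝ (fun k ↦ Ω.domRestrict (φ k)) (A : Set κ) ↔
      ∀ c : κ → ℝ, (∀ p ∈ Ω, ∑ k ∈ A, c k * φ k p = 0) → ∀ k ∈ A, c k = 0 := by
  rw [linearIndepOn_finset_iff]
  simp [funext_iff]

variable {E L : Type*} [AddCommGroup E] [AddCommGroup L] {ι : L →+ E} {Ω : Set E} {B : E → ℝ}
  {A : Finset L}

/-- On `Ω`, the translates `B (· - ι w)` with `w ∈ A` are linearly independent and all others
vanish identically. -/
structure IsLocalBasis (ι : L →+ E) (Ω : Set E) (B : E → ℝ) (A : Finset L) : Prop where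
  eq_zero : ∀ w ∉ A, ∀ p ∈ Ω, B (p - ι w) = 0
  linearIndepOn : LinearIndepOn ℝ (fun w ↦ Ω.domRestrict fun p ↦ B (p - ι w)) (A : Set L)

lemma IsLocalBasis.mem_iff (h : IsLocalBasis ι Ω B A) (w : L) :
    w ∈ A ↔ ¬ ∀ p ∈ Ω, B (p - ι w) = 0 := by
  refine ⟨fun hw hzero ↦ h.linearIndepOn.ne_zero hw ?_, fun hw ↦ ?_⟩
  · ext p
    exact hzero p p.2
  · by_contra hmem
    exact hw (h.eq_zero w hmem)

lemma IsLocalBasis.linearIndepOn_comp (h : IsLocalBasis ι Ω B A) {X : Type*} {Λ : Set X}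
    {φ : X → E} (hφ : Ω ⊆ φ '' Λ) :
    LinearIndepOn ℝ (fun w ↦ Λ.domRestrict fun x ↦ B (φ x - ι w)) (A : Set L) := by
  rw [linearIndepOn_domRestrict_iff]
  intro c hc
  refine linearIndepOn_domRestrict_iff.1 h.linearIndepOn c fun p hp ↦ ?_
  obtain ⟨x, hx, rfl⟩ := hφ hp
  exact hc x hx

lemma linearIndepOn_of_nodal [TopologicalSpace E] [IsTopologicalAddGroup E] [DecidableEq L]
    (hB : Continuous B) {x : L → E} (hx : ∀ w ∈ A, x w ∈ closure Ω)
    (hnodal : ∀ w ∈ A, ∀ w' ∈ A, B (x w - ι w') = if w' = w then 1 else 0) :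
    LinearIndepOn ℝ (fun w ↦ Ω.domRestrict fun p ↦ B (p - ι w)) (A : Set L) := by
  rw [linearIndepOn_domRestrict_iff]
  intro c hc w hw
  have hclosed : IsClosed {p | ∑ w' ∈ A, c w' * B (p - ι w') = 0} :=
    isClosed_eq (by fun_prop) continuous_const
  have hzero : ∑ w' ∈ A, c w' * B (x w - ι w') = 0 := closure_minimal hc hclosed (hx w hw)
  rw [Finset.sum_congr rfl fun w' hw' ↦ by rw [hnodal w hw w' hw']] at hzero
  simpa [hw] using hzero

lemma sum_fibre_eq_of_hasLineSum [TopologicalSpace E] {M : Type*} [AddCommGroup M]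
    [DecidableEq M] {e : L} {l : L →+ M} (hl : l.ker = AddSubgroup.zmultiples e)
    (he : Injective fun j : ℤ ↦ j • e) {g : E → ℝ} (hg : HasLineSum (ι e) B g)
    (hzero : ∀ w ∉ A, ∀ p ∈ Ω, B (p - ι w) = 0) (w₀ : L) {p : E} (hp : p ∈ Ω) :
    ∑ w ∈ A with l w = l w₀, B (p - ι w) = g (p - ι w₀) := by
  have hinj : Injective fun j : ℤ ↦ w₀ + j • e := fun i j h ↦ he (add_left_cancel h)
  obtain ⟨S, hsum, hS⟩ := ((hg {p - ι w₀} isCompact_singleton).and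
    (Filter.eventually_ge_atTop (A.preimage _ hinj.injOn))).exists
  rw [← hsum _ rfl]
  symm
  have hterm (j : ℤ) : B (p - ι w₀ - j • ι e) = B (p - ι (w₀ + j • e)) := by
    rw [map_add, map_zsmul, sub_add_eq_sub_sub]
  have hvanish : ∀ j ∈ S, j ∉ A.preimage _ hinj.injOn → B (p - ι w₀ - j • ι e) = 0 := by
    intro j _ hj
    rw [hterm]
    exact hzero _ (by simpa using hj) p hp
  rw [← Finset.sum_subset hS hvanish]
  have hle : l e = 0 := by
    rw [← AddMonoidHom.mem_ker, hl]
    exact AddSubgroup.mem_zmultiples e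
  refine Finset.sum_nbij (fun j : ℤ ↦ w₀ + j • e) ?_ hinj.injOn ?_ fun j _ ↦ hterm j
  · intro j hj
    simpa [hle] using hj
  · intro w hw
    obtain ⟨hwA, hlw⟩ := Finset.mem_filter.1 hw
    have hker : w - w₀ ∈ l.ker := by simp [AddMonoidHom.mem_ker, hlw]
    rw [hl, AddSubgroup.mem_zmultiples_iff] at hker
    obtain ⟨j, hj⟩ := hker
    refine ⟨j, ?_, ?_⟩ <;> simp [hj, hwA]

end LocalBases

section LocalBasisStep

variable {E L : Type*} [NormedAddCommGroup E] [NormedSpace ℝ E] [AddCommGroup L] {ι : L →+ E}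
  {Ω : Set E} {B : E → ℝ} {A A' : Finset L} {e : L} {c : L → ℝ}

lemma sum_mul_sub_eq_zero_of_dirConv (hΩ : IsOpen Ω) (hB : Continuous B)
    (hc : ∀ p ∈ Ω, ∑ w ∈ A, c w * dirConv (ι e) B (p - ι w) = 0) {p : E} (hp : p ∈ Ω) :
    ∑ w ∈ A, c w * (B (p - ι w) - B (p - ι (w + e))) = 0 := by
  have hderiv : HasDerivAt (fun s : ℝ ↦ ∑ w ∈ A, c w * dirConv (ι e) B (p + s • ι e - ι w))
      (∑ w ∈ A, c w * (B (p - ι w) - B (p - ι (w + e)))) 0 := by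
    refine HasDerivAt.fun_sum fun w _ ↦ HasDerivAt.const_mul _ ?_
    have h := hasDerivAt_dirConv_line (ι e) hB (p - ι w)
    simpa only [map_add, sub_add_eq_sub_sub, sub_add_eq_add_sub] using h
  have hline : Filter.Tendsto (fun s : ℝ ↦ p + s • ι e) (nhds 0) (nhds p) :=
    (by fun_prop : Continuous fun s : ℝ ↦ p + s • ι e).tendsto' 0 p (by simp)
  have hconst : (fun s : ℝ ↦ ∑ w ∈ A, c w * dirConv (ι e) B (p + s • ι e - ι w)) =ᶠ[nhds 0]
      fun _ ↦ 0 :=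
    (hline.eventually (hΩ.mem_nhds hp)).mono fun s hs ↦ hc _ hs
  exact hderiv.unique ((hasDerivAt_const 0 0).congr_of_eventuallyEq hconst)

lemma IsLocalBasis.coeff_eq_coeff_sub (hΩ : IsOpen Ω) (hB : Continuous B)
    (h : IsLocalBasis ι Ω B A') (hA' : ∀ w ∈ A', w ∈ A ∧ w - e ∈ A)
    (hc : ∀ p ∈ Ω, ∑ w ∈ A, c w * dirConv (ι e) B (p - ι w) = 0) {w : L} (hw : w ∈ A') :
    c w = c (w - e) := by
  refine sub_eq_zero.1 (linearIndepOn_domRestrict_iff.1 h.linearIndepOn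
    (fun w ↦ c w - c (w - e)) (fun p hp ↦ ?_) w hw)
  have hunshifted : ∑ w ∈ A', c w * B (p - ι w) = ∑ w ∈ A, c w * B (p - ι w) :=
    Finset.sum_subset (fun w hw ↦ (hA' w hw).1) fun w _ hw ↦ by rw [h.eq_zero w hw p hp, mul_zero]
  have hshifted : ∑ w ∈ A', c (w - e) * B (p - ι w) = ∑ w ∈ A, c w * B (p - ι (w + e)) := by
    refine Finset.sum_of_injOn (· - e) (sub_left_injective.injOn) (fun w hw ↦ (hA' w hw).2)
      (fun w _ hw ↦ ?_) fun w _ ↦ by rw [sub_add_cancel]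
    have hmem : w + e ∉ A' := fun hmem ↦ hw ⟨w + e, hmem, add_sub_cancel_right w e⟩
    rw [h.eq_zero _ hmem p hp, mul_zero]
  have hdiff := sum_mul_sub_eq_zero_of_dirConv hΩ hB hc hp
  simp only [mul_sub, Finset.sum_sub_distrib] at hdiff
  simp only [sub_mul, Finset.sum_sub_distrib]
  rw [hunshifted, hshifted, hdiff]

lemma eq_of_sub_mem_zmultiples_of_forall_eq_sub
    (hconv : ∀ w ∈ A, ∀ j : ℕ, w + (j + 1) • e ∈ A → w + j • e ∈ A)
    (hstep : ∀ w ∈ A, w - e ∈ A → c w = c (w - e)) {w w' : L} (hw : w ∈ A) (hw' : w' ∈ A)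
    (hsub : w' - w ∈ AddSubgroup.zmultiples e) : c w = c w' := by
  have hnat (w : L) (hw : w ∈ A) (j : ℕ) (hj : w + j • e ∈ A) : c (w + j • e) = c w := by
    induction j with
    | zero => simp
    | succ j ih =>
      have hprev := hconv w hw j hj
      have hsub : w + (j + 1) • e - e = w + j • e := by
        rw [succ_nsmul]
        abel
      rw [hstep _ hj (by rwa [hsub]), hsub, ih hprev]
  obtain ⟨j, hj⟩ := AddSubgroup.mem_zmultiples_iff.1 hsub
  rcases Int.eq_nat_or_neg j with ⟨n, rfl | rfl⟩
  · have heq : w' = w + n • e := by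
      rw [← natCast_zsmul, hj]
      abel
    rw [heq] at hw' ⊢
    exact (hnat w hw n hw').symm
  · have heq : w = w' + n • e := by
      rw [neg_smul, natCast_zsmul] at hj
      rw [neg_inj.1 (hj.trans (neg_sub w w').symm)]
      abel
    rw [heq] at hw ⊢
    exact hnat w' hw' n hw

theorem IsLocalBasis.dirConv {M : Type*} [AddCommGroup M] [DecidableEq M] {l : L →+ M}
    {g : E → ℝ} {G : M → E → ℝ} (h : IsLocalBasis ι Ω B A') (hΩ : IsOpen Ω) (hB : Continuous B)
    (hl : l.ker = AddSubgroup.zmultiples e) (he : Injective fun j : ℤ ↦ j • e)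
    (hA' : ∀ w, w ∈ A' ↔ w ∈ A ∧ w - e ∈ A)
    (hconv : ∀ w ∈ A, ∀ j : ℕ, w + (j + 1) • e ∈ A → w + j • e ∈ A)
    (hzero : ∀ w ∉ A, ∀ p ∈ Ω, dirConv (ι e) B (p - ι w) = 0)
    (hsum : HasLineSum (ι e) (dirConv (ι e) B) g) (hg : ∀ p w, g (p - ι w) = G (l w) p)
    (hG : LinearIndepOn ℝ (fun k ↦ Ω.domRestrict (G k)) (A.image l : Set M)) :
    IsLocalBasis ι Ω (dirConv (ι e) B) A := by
  refine ⟨hzero, linearIndepOn_domRestrict_iff.2 fun c hc ↦ ?_⟩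
  have hfibre : ∀ w ∈ A, ∀ w' ∈ A, l w = l w' → c w = c w' := by
    refine fun w hw w' hw' hll ↦ eq_of_sub_mem_zmultiples_of_forall_eq_sub hconv
      (fun w hw hwe ↦ h.coeff_eq_coeff_sub hΩ hB (fun w ↦ (hA' w).1) hc ((hA' w).2 ⟨hw, hwe⟩))
      hw hw' ?_
    rw [← hl, AddMonoidHom.mem_ker, map_sub, hll, sub_self]
  set r : M → L := invFunOn l A
  have hc_eq : ∀ w ∈ A, c w = c (r (l w)) := fun w hw ↦
    hfibre w hw _ (invFunOn_apply_mem hw) (invFunOn_apply_eq hw).symm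
  suffices hfactor : ∀ k ∈ A.image l, c (r k) = 0 from
    fun w hw ↦ (hc_eq w hw).trans (hfactor _ (Finset.mem_image_of_mem l hw))
  refine linearIndepOn_domRestrict_iff.1 hG (fun k ↦ c (r k)) fun p hp ↦ ?_
  rw [← hc p hp, ← Finset.sum_fiberwise_of_maps_to fun w ↦ Finset.mem_image_of_mem l]
  refine Finset.sum_congr rfl fun k hk ↦ ?_
  obtain ⟨w₀, -, rfl⟩ := Finset.mem_image.1 hk
  rw [← hg, ← sum_fibre_eq_of_hasLineSum hl he hsum hzero w₀ hp, Finset.mul_sum]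
  refine Finset.sum_congr rfl fun w hw ↦ ?_
  obtain ⟨hwA, hlw⟩ := Finset.mem_filter.1 hw
  rw [hc_eq w hwA, hlw]

end LocalBasisStep

section CardinalBSplines

/-- The cardinal B-spline of order `m + 2`, which is supported on `[0, m + 2]`. The indexing starts
at the piecewise linear hat, the lowest order that is continuous. -/
def cardBSpline : ℕ → ℝ → ℝ
  | 0 => fun y ↦ max 0 (min y (2 - y))
  | m + 1 => dirConv 1 (cardBSpline m)

lemma cardBSpline_succ (m : ℕ) : cardBSpline (m + 1) = dirConv 1 (cardBSpline m) := rfl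

lemma continuous_cardBSpline (m : ℕ) : Continuous (cardBSpline m) := by
  induction m with
  | zero =>
    unfold cardBSpline
    fun_prop
  | succ m ih => exact continuous_dirConv 1 ih

lemma mem_Ioo_of_cardBSpline_ne_zero {m : ℕ} {y : ℝ} (h : cardBSpline m y ≠ 0) :
    y ∈ Ioo (0 : ℝ) (m + 2) := by
  induction m generalizing y with
  | zero =>
    simp only [cardBSpline] at h
    constructor <;> grind
  | succ m ih =>
    obtain ⟨t, ⟨ht₀, ht₁⟩, hne⟩ := exists_ne_zero_of_dirConv_ne_zero h
    obtain ⟨hlo, hhi⟩ := ih hne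
    rw [smul_eq_mul, mul_one] at hlo hhi
    push_cast
    constructor <;> linarith

lemma hasLineSum_cardBSpline (m : ℕ) : HasLineSum 1 (cardBSpline m) fun _ ↦ 1 := by
  induction m with
  | zero =>
    refine hasLineSum_of_two_terms (π := fun y ↦ y) continuous_id (by simp)
      (fun y hy ↦ by simpa using mem_Ioo_of_cardBSpline_ne_zero hy) (fun _ _ ↦ rfl) ?_
    intro y hy₀ hy₁
    simp only [cardBSpline]
    grind
  | succ m ih =>
    have hone : dirConv (1 : ℝ) (fun _ ↦ 1) = fun _ : ℝ ↦ 1 := by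
      ext
      simp [dirConv]
    rw [← hone]
    exact ih.dirConv (continuous_cardBSpline m) 1

lemma cardBSpline_sub_eq_zero (m : ℕ) {k w : ℤ} (hw : w ∉ Finset.Ioc (k - (m + 2)) k) {y : ℝ}
    (hy : y ∈ Ioo (k : ℝ) (k + 1)) : cardBSpline m (y - Int.castAddHom ℝ w) = 0 := by
  by_contra hne
  obtain ⟨hlo, hhi⟩ := mem_Ioo_of_cardBSpline_ne_zero hne
  obtain ⟨hky, hyk⟩ := hy
  rw [Int.coe_castAddHom] at hlo hhi
  have hlt : w < k + 1 := by exact_mod_cast (by linarith : (w : ℝ) < k + 1)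
  have hgt : k < w + m + 2 := by exact_mod_cast (by linarith : (k : ℝ) < w + m + 2)
  rw [Finset.mem_Ioc] at hw
  omega

lemma isLocalBasis_cardBSpline_zero (k : ℤ) :
    IsLocalBasis (Int.castAddHom ℝ) (Ioo (k : ℝ) (k + 1)) (cardBSpline 0)
      (Finset.Ioc (k - (0 + 2)) k) := by
  refine ⟨fun w hw y hy ↦ cardBSpline_sub_eq_zero 0 (by simpa using hw) hy, ?_⟩
  refine linearIndepOn_of_nodal (continuous_cardBSpline 0) (x := fun w ↦ (w : ℝ) + 1) ?_ ?_
  · intro w hw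
    rw [closure_Ioo (by simp)]
    rw [Finset.mem_Ioc] at hw
    constructor
    · exact_mod_cast (by omega : k ≤ w + 1)
    · exact_mod_cast (by omega : w + 1 ≤ k + 1)
  · intro w _ w' _
    split_ifs with h
    · norm_num [h, cardBSpline]
    · by_contra hne
      obtain ⟨hlo, hhi⟩ := mem_Ioo_of_cardBSpline_ne_zero hne
      rw [Int.coe_castAddHom] at hlo hhi
      rw [Nat.cast_zero] at hhi
      have hlt : w' < w + 1 := by exact_mod_cast (by linarith : (w' : ℝ) < w + 1)
      have hgt : w + 1 < w' + 2 := by exact_mod_cast (by linarith : (w + 1 : ℝ) < w' + 2)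
      omega

lemma isLocalBasis_cardBSpline (m : ℕ) (k : ℤ) :
    IsLocalBasis (Int.castAddHom ℝ) (Ioo (k : ℝ) (k + 1)) (cardBSpline m)
      (Finset.Ioc (k - (m + 2)) k) := by
  induction m with
  | zero => exact_mod_cast isLocalBasis_cardBSpline_zero k
  | succ m ih =>
    have hzero (w : ℤ) (hw : w ∉ Finset.Ioc (k - ((m + 1 : ℕ) + 2)) k) (y : ℝ)
        (hy : y ∈ Ioo (k : ℝ) (k + 1)) : cardBSpline (m + 1) (y - Int.castAddHom ℝ w) = 0 :=
      cardBSpline_sub_eq_zero (m + 1) hw hy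
    have hsum : HasLineSum (Int.castAddHom ℝ 1) (cardBSpline (m + 1)) fun _ ↦ 1 := by
      simpa using hasLineSum_cardBSpline (m + 1)
    have hconv : cardBSpline (m + 1) = dirConv (Int.castAddHom ℝ 1) (cardBSpline m) := by
      simp [cardBSpline_succ]
    rw [hconv] at hzero hsum ⊢
    refine ih.dirConv (l := (0 : ℤ →+ ℤ)) (G := fun _ _ ↦ 1) isOpen_Ioo
      (continuous_cardBSpline m) ?_ ?_ ?_ ?_ hzero hsum (fun _ _ ↦ rfl) ?_
    · ext j
      simp
    · intro i j h
      simpa using h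
    · intro w
      simp only [Finset.mem_Ioc]
      omega
    · intro w hw j hj
      simp only [Finset.mem_Ioc, nsmul_eq_mul, mul_one] at hw hj ⊢
      push_cast at hj
      omega
    · have hmid : (k : ℝ) + 1 / 2 ∈ Ioo (k : ℝ) (k + 1) := by constructor <;> linarith
      have hone : LinearIndepOn ℝ
          (fun _ ↦ (Ioo (k : ℝ) (k + 1)).domRestrict fun _ ↦ (1 : ℝ)) ({0} : Set ℤ) := by
        rw [linearIndepOn_singleton_iff ℝ]
        exact fun hzero ↦ one_ne_zero (congrFun hzero ⟨_, hmid⟩)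
      refine hone.mono fun i hi ↦ ?_
      obtain ⟨w, -, rfl⟩ := Finset.mem_image.1 hi
      rfl

end CardinalBSplines

section Grid

/-- The inclusion of the vertex set `ℤ²` of the grid into the plane. -/
def latticeEmb : ℤ × ℤ →+ Pt :=
  (Int.castAddHom ℝ).prodMap (Int.castAddHom ℝ)

@[simp]
lemma latticeEmb_apply (w : ℤ × ℤ) : latticeEmb w = ((w.1 : ℝ), (w.2 : ℝ)) := rfl

lemma fst_sub_smul_latticeEmb (p : Pt) (t : ℝ) (w : ℤ × ℤ) :
    (p - t • latticeEmb w).1 = p.1 - t * w.1 := rfl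

lemma snd_sub_smul_latticeEmb (p : Pt) (t : ℝ) (w : ℤ × ℤ) :
    (p - t • latticeEmb w).2 = p.2 - t * w.2 := rfl

namespace Tri

/-- The index of the diagonal strip `diag < x - y < diag + 1` that contains the triangle. -/
def diag (T : Tri) : ℤ :=
  T.v.1 - T.v.2 - if T.up then 1 else 0

lemma diag_eq_or (T : Tri) : T.diag = T.v.1 - T.v.2 - 1 ∨ T.diag = T.v.1 - T.v.2 := by
  unfold diag
  split_ifs <;> simp

lemma mem_toSet_lower {v : ℤ × ℤ} {p : Pt} :
    p ∈ (⟨v, false⟩ : Tri).toSet ↔ v.2 < p.2 ∧ p.2 - v.2 < p.1 - v.1 ∧ p.1 < v.1 + 1 := by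
  simp [toSet]

lemma mem_toSet_upper {v : ℤ × ℤ} {p : Pt} :
    p ∈ (⟨v, true⟩ : Tri).toSet ↔ v.1 < p.1 ∧ p.1 - v.1 < p.2 - v.2 ∧ p.2 < v.2 + 1 := by
  simp [toSet]

lemma mem_toSet {T : Tri} {p : Pt} :
    p ∈ T.toSet ↔ p.1 ∈ Ioo (T.v.1 : ℝ) (T.v.1 + 1) ∧ p.2 ∈ Ioo (T.v.2 : ℝ) (T.v.2 + 1) ∧
      p.1 - p.2 ∈ Ioo (T.diag : ℝ) (T.diag + 1) := by
  unfold toSet diag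
  split_ifs <;> push_cast <;> simp only [mem_ofPred_eq, mem_Ioo] <;> grind

lemma isOpen_toSet (T : Tri) : IsOpen T.toSet := by
  have h : T.toSet = Prod.fst ⁻¹' Ioo (T.v.1 : ℝ) (T.v.1 + 1) ∩
      (Prod.snd ⁻¹' Ioo (T.v.2 : ℝ) (T.v.2 + 1) ∩
        (fun p : Pt ↦ p.1 - p.2) ⁻¹' Ioo (T.diag : ℝ) (T.diag + 1)) := by
    ext p
    exact mem_toSet
  rw [h]
  exact (isOpen_Ioo.preimage continuous_fst).inter
    ((isOpen_Ioo.preimage continuous_snd).inter (isOpen_Ioo.preimage (by fun_prop)))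

lemma Ioo_subset_image_fst (T : Tri) : Ioo (T.v.1 : ℝ) (T.v.1 + 1) ⊆ Prod.fst '' T.toSet := by
  rintro x ⟨hlo, hhi⟩
  obtain ⟨⟨m, n⟩, _ | _⟩ := T
  · refine ⟨(x, n + (x - m) / 2), ?_, rfl⟩
    rw [mem_toSet_lower]
    constructor <;> grind
  · refine ⟨(x, n + (x - m + 1) / 2), ?_, rfl⟩
    rw [mem_toSet_upper]
    constructor <;> grind

lemma Ioo_subset_image_snd (T : Tri) : Ioo (T.v.2 : ℝ) (T.v.2 + 1) ⊆ Prod.snd '' T.toSet := by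
  rintro y ⟨hlo, hhi⟩
  obtain ⟨⟨m, n⟩, _ | _⟩ := T
  · refine ⟨(m + (y - n + 1) / 2, y), ?_, rfl⟩
    rw [mem_toSet_lower]
    constructor <;> grind
  · refine ⟨(m + (y - n) / 2, y), ?_, rfl⟩
    rw [mem_toSet_upper]
    constructor <;> grind

lemma Ioo_subset_image_sub (T : Tri) :
    Ioo (T.diag : ℝ) (T.diag + 1) ⊆ (fun p : Pt ↦ p.1 - p.2) '' T.toSet := by
  rintro z ⟨hlo, hhi⟩
  unfold diag at hlo hhi
  obtain ⟨⟨m, n⟩, _ | _⟩ := T <;> push_cast at hlo hhi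
  · refine ⟨(m + (z - m + n + 1) / 2, n + (1 - z + m - n) / 2), ?_, by ring⟩
    rw [mem_toSet_lower]
    constructor <;> grind
  · refine ⟨(m + (z - m + n + 1) / 2, n + (1 - z + m - n) / 2), ?_, by ring⟩
    rw [mem_toSet_upper]
    constructor <;> grind

lemma nonempty_toSet (T : Tri) : T.toSet.Nonempty :=
  ((nonempty_Ioo.2 (lt_add_one (T.v.1 : ℝ))).mono T.Ioo_subset_image_fst).of_image

lemma mem_closure_toSet {T : Tri} {p : Pt} (h₁ : p.1 ∈ Icc (T.v.1 : ℝ) (T.v.1 + 1))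
    (h₂ : p.2 ∈ Icc (T.v.2 : ℝ) (T.v.2 + 1)) (h₃ : p.1 - p.2 ∈ Icc (T.diag : ℝ) (T.diag + 1)) :
    p ∈ closure T.toSet := by
  obtain ⟨q, hq⟩ := T.nonempty_toSet
  have hinside : openSegment ℝ p q ⊆ T.toSet := by
    rintro _ ⟨s, t, hs, ht, hst, rfl⟩
    have hconv {m M x y : ℝ} (hx : x ∈ Icc m M) (hy : y ∈ Ioo m M) :
        s * x + t * y ∈ Ioo m M := by
      obtain rfl : s = 1 - t := by linarith
      constructor <;> nlinarith [hx.1, hx.2, hy.1, hy.2]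
    rw [mem_toSet] at hq ⊢
    refine ⟨hconv h₁ hq.1, hconv h₂ hq.2.1, ?_⟩
    have hsub := hconv h₃ hq.2.2
    convert hsub using 1
    simp only [Prod.fst_add, Prod.snd_add, Prod.smul_fst, Prod.smul_snd, smul_eq_mul]
    ring
  exact closure_mono hinside (segment_subset_closure_openSegment (left_mem_segment ℝ p q))

end Tri

/-- The interior of the zonotope `[0, a]·e₁ + [0, b]·e₂ + [0, c]·e₃`, the support of the box spline
`B_(a, b, c)`. -/
def hexagon (a b c : ℕ) : Set Pt :=
  {p | p.1 ∈ Ioo (0 : ℝ) (a + c) ∧ p.2 ∈ Ioo (0 : ℝ) (b + c) ∧ p.1 - p.2 ∈ Ioo (-b : ℝ) a}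

/-- The lattice points `w` for which the hexagon translated by `w` meets the triangle `T`. -/
def window (a b c : ℕ) (T : Tri) : Finset (ℤ × ℤ) :=
  (Finset.Ioc (T.v.1 - (a + c)) T.v.1 ×ˢ Finset.Ioc (T.v.2 - (b + c)) T.v.2).filter
    fun w ↦ w.1 - w.2 ∈ Finset.Ioc (T.diag - a) (T.diag + b)

lemma mem_window {a b c : ℕ} {T : Tri} {w : ℤ × ℤ} :
    w ∈ window a b c T ↔
      (T.v.1 - (a + c) < w.1 ∧ w.1 ≤ T.v.1) ∧ (T.v.2 - (b + c) < w.2 ∧ w.2 ≤ T.v.2) ∧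
        T.diag - a < w.1 - w.2 ∧ w.1 - w.2 ≤ T.diag + b := by
  simp only [window, Finset.mem_filter, Finset.mem_product, Finset.mem_Ioc, and_assoc]

lemma mem_window_of_sub_mem_hexagon {a b c : ℕ} {T : Tri} {p : Pt} {w : ℤ × ℤ} (hp : p ∈ T.toSet)
    (h : p - latticeEmb w ∈ hexagon a b c) : w ∈ window a b c T := by
  obtain ⟨⟨hlo₁, hhi₁⟩, ⟨hlo₂, hhi₂⟩, hlo₃, hhi₃⟩ := Tri.mem_toSet.1 hp
  simp only [hexagon, latticeEmb_apply, mem_ofPred_eq, Prod.fst_sub, Prod.snd_sub, mem_Ioo] at h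
  obtain ⟨⟨h₁, h₁'⟩, ⟨h₂, h₂'⟩, h₃, h₃'⟩ := h
  rw [mem_window]
  refine ⟨⟨?_, Int.lt_add_one_iff.1 ?_⟩, ⟨?_, Int.lt_add_one_iff.1 ?_⟩, ?_,
    Int.lt_add_one_iff.1 ?_⟩ <;> rify <;> linarith

lemma add_nsmul_mem_window {a b c : ℕ} {T : Tri} {w e : ℤ × ℤ} (hw : w ∈ window a b c T) (j : ℕ)
    (hj : w + (j + 1) • e ∈ window a b c T) : w + j • e ∈ window a b c T := by
  have hlo {m x d : ℤ} (hx : m < x) (hxd : m < x + (j + 1) * d) : m < x + j * d := by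
    rcases le_total 0 d <;> nlinarith
  have hhi {M x d : ℤ} (hx : x ≤ M) (hxd : x + (j + 1) * d ≤ M) : x + j * d ≤ M := by
    rcases le_total 0 d <;> nlinarith
  have hsub (k : ℤ) : w.1 + k * e.1 - (w.2 + k * e.2) = w.1 - w.2 + k * (e.1 - e.2) := by ring
  simp only [mem_window, Prod.fst_add, Prod.snd_add, Prod.smul_fst, Prod.smul_snd] at hw hj ⊢
  simp only [nsmul_eq_mul, hsub, Nat.cast_add_one] at hj ⊢
  exact ⟨⟨hlo hw.1.1 hj.1.1, hhi hw.1.2 hj.1.2⟩, ⟨hlo hw.2.1.1 hj.2.1.1, hhi hw.2.1.2 hj.2.1.2⟩,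
    hlo hw.2.2.1 hj.2.2.1, hhi hw.2.2.2 hj.2.2.2⟩

lemma mem_window_iff_e₁ {a b c : ℕ} {T : Tri} (w : ℤ × ℤ) :
    w ∈ window a b c T ↔ w ∈ window (a + 1) b c T ∧ w - (1, 0) ∈ window (a + 1) b c T := by
  simp only [mem_window, Prod.fst_sub, Prod.snd_sub]
  push_cast
  omega

lemma mem_window_iff_e₂ {a b c : ℕ} {T : Tri} (w : ℤ × ℤ) :
    w ∈ window a b c T ↔ w ∈ window a (b + 1) c T ∧ w - (0, 1) ∈ window a (b + 1) c T := by
  simp only [mem_window, Prod.fst_sub, Prod.snd_sub]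
  push_cast
  omega

lemma mem_window_iff_e₃ {a b c : ℕ} {T : Tri} (w : ℤ × ℤ) :
    w ∈ window a b c T ↔ w ∈ window a b (c + 1) T ∧ w - (1, 1) ∈ window a b (c + 1) T := by
  simp only [mem_window, Prod.fst_sub, Prod.snd_sub]
  push_cast
  omega

lemma card_window (a b c : ℕ) (T : Tri) : (window a b c T).card = a * b + a * c + b * c := by
  let shear₁₃ : ℤ × ℤ ≃ ℤ × ℤ :=
    ⟨fun w ↦ (w.1 + w.2, w.2), fun w ↦ (w.1 - w.2, w.2), fun w ↦ by simp, fun w ↦ by simp⟩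
  let shear₂₃ : ℤ × ℤ ≃ ℤ × ℤ :=
    ⟨fun w ↦ (w.2, w.2 - w.1), fun w ↦ (w.1 - w.2, w.1), fun w ↦ by simp, fun w ↦ by simp⟩
  let P₁₂ := Finset.Ioc (T.v.1 - (a + c)) (T.v.1 - c) ×ˢ Finset.Ioc (T.v.2 - (b + c)) (T.v.2 - c)
  let P₁₃ := (Finset.Ioc (T.diag - a) T.diag ×ˢ Finset.Ioc (T.v.2 - c) T.v.2).map
    shear₁₃.toEmbedding
  let P₂₃ := (Finset.Ioc T.diag (T.diag + b) ×ˢ Finset.Ioc (T.v.1 - c) T.v.1).map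
    shear₂₃.toEmbedding
  have htile : window a b c T = P₁₂ ∪ P₁₃ ∪ P₂₃ := by
    ext w
    have hdiag := T.diag_eq_or
    simp only [mem_window, Finset.mem_union, P₁₂, P₁₃, P₂₃, Finset.mem_map_equiv,
      Finset.mem_product, Finset.mem_Ioc, shear₁₃, shear₂₃, Equiv.symm_mk, Equiv.coe_fn_mk]
    omega
  have hdisj : Disjoint P₁₂ P₁₃ ∧ Disjoint (P₁₂ ∪ P₁₃) P₂₃ := by
    simp only [Finset.disjoint_left, Finset.mem_union, P₁₂, P₁₃, P₂₃, Finset.mem_map_equiv,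
      Finset.mem_product, Finset.mem_Ioc, shear₁₃, shear₂₃, Equiv.symm_mk, Equiv.coe_fn_mk]
    constructor <;> intros <;> omega
  rw [htile, Finset.card_union_of_disjoint hdisj.2, Finset.card_union_of_disjoint hdisj.1]
  simp only [P₁₂, P₁₃, P₂₃, Finset.card_map, Finset.card_product, Int.card_Ioc]
  congr 2 <;> congr 1 <;> omega

end Grid

section PiecewisePolynomials

/-- The functions on the plane that agree with a polynomial on every triangle of the grid. -/
def IsPiecewisePoly (f : Pt → ℝ) : Prop :=
  ∀ T : Tri, ∃ q : BPoly, IsPiece f T q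

lemma exists_evalP_sub_smul_eq_eval₂ (e : Pt) (q : BPoly) :
    ∃ Q : Polynomial BPoly, ∀ (p : Pt) (t : ℝ),
      evalP q (p - t • e) = Q.eval₂ (MvPolynomial.eval ![p.1, p.2]) t := by
  induction q using MvPolynomial.induction_on with
  | C a => exact ⟨Polynomial.C (C a), fun p t ↦ by simp [evalP]⟩
  | add q r hq hr =>
    obtain ⟨Q, hQ⟩ := hq
    obtain ⟨R, hR⟩ := hr
    refine ⟨Q + R, fun p t ↦ ?_⟩
    rw [Polynomial.eval₂_add, ← hQ, ← hR]
    exact map_add _ _ _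
  | mul_X q i hq =>
    obtain ⟨Q, hQ⟩ := hq
    refine ⟨Q * (Polynomial.C (X i) - Polynomial.C (C (![e.1, e.2] i)) * Polynomial.X),
      fun p t ↦ ?_⟩
    rw [Polynomial.eval₂_mul, ← hQ]
    refine (map_mul _ _ _).trans (congrArg _ ?_)
    fin_cases i <;> simp [mul_comm t]

lemma exists_evalP_eq_integral (e : Pt) (q α β : BPoly) :
    ∃ r : BPoly, ∀ p : Pt,
      evalP r p = ∫ t in (evalP α p)..(evalP β p), evalP q (p - t • e) := by
  obtain ⟨Q, hQ⟩ := exists_evalP_sub_smul_eq_eval₂ e q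
  refine ⟨∑ i ∈ Finset.range (Q.natDegree + 1),
    Q.coeff i * (C ((i + 1 : ℝ)⁻¹) * (β ^ (i + 1) - α ^ (i + 1))), fun p ↦ ?_⟩
  simp only [hQ, Polynomial.eval₂_eq_sum_range]
  rw [intervalIntegral.integral_finsetSum
    fun i _ ↦ Continuous.intervalIntegrable (by fun_prop) _ _, evalP, map_sum]
  refine Finset.sum_congr rfl fun i _ ↦ ?_
  rw [intervalIntegral.integral_const_mul, integral_pow]
  simp only [evalP, map_mul, map_sub, map_pow, MvPolynomial.eval_C]
  ring

lemma IsPiecewisePoly.translate {f : Pt → ℝ} (hf : IsPiecewisePoly f) (w : ℤ × ℤ) :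
    IsPiecewisePoly fun p ↦ f (p - latticeEmb w) := by
  intro T
  obtain ⟨q, hq⟩ := hf ⟨T.v - w, T.up⟩
  obtain ⟨Q, hQ⟩ := exists_evalP_sub_smul_eq_eval₂ (latticeEmb w) q
  refine ⟨Q.eval 1, fun p hp ↦ ?_⟩
  have hmem : p - latticeEmb w ∈ (⟨T.v - w, T.up⟩ : Tri).toSet := by
    simp only [Tri.mem_toSet, Tri.diag, mem_Ioo, latticeEmb_apply, Prod.fst_sub,
      Prod.snd_sub] at hp ⊢
    push_cast at hp ⊢
    grind
  calc f (p - latticeEmb w) = evalP q (p - (1 : ℝ) • latticeEmb w) := by rw [hq hmem, one_smul]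
    _ = evalP (Q.eval 1) p := by rw [hQ, Polynomial.eval₂_at_one, evalP]

lemma integral_congr_of_mem_triangle {f : Pt → ℝ} {T : Tri} {q : BPoly} (hq : IsPiece f T q)
    {e p : Pt} {r s : ℝ} (hrs : r ≤ s) (hmem : ∀ t ∈ Ioo r s, p - t • e ∈ T.toSet) :
    ∫ t in r..s, f (p - t • e) = ∫ t in r..s, evalP q (p - t • e) := by
  rw [intervalIntegral.integral_of_le hrs, intervalIntegral.integral_of_le hrs,
    MeasureTheory.integral_Ioc_eq_integral_Ioo, MeasureTheory.integral_Ioc_eq_integral_Ioo]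
  exact MeasureTheory.setIntegral_congr_fun measurableSet_Ioo fun t ht ↦ hq (hmem t ht)

-- A unit segment in a grid direction ending in `T` crosses two grid lines, at affine parameters.
lemma IsPiecewisePoly.exists_isPiece_dirConv {f : Pt → ℝ} (hf : Continuous f)
    (hpoly : IsPiecewisePoly f) {e : Pt} {T : Tri} (T₁ T₂ T₃ : Tri) (α β : BPoly)
    (h₀ : ∀ p ∈ T.toSet, 0 ≤ evalP α p ∧ evalP α p ≤ evalP β p ∧ evalP β p ≤ 1)
    (h₁ : ∀ p ∈ T.toSet, ∀ t ∈ Ioo 0 (evalP α p), p - t • e ∈ T₁.toSet)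
    (h₂ : ∀ p ∈ T.toSet, ∀ t ∈ Ioo (evalP α p) (evalP β p), p - t • e ∈ T₂.toSet)
    (h₃ : ∀ p ∈ T.toSet, ∀ t ∈ Ioo (evalP β p) 1, p - t • e ∈ T₃.toSet) :
    ∃ q, IsPiece (dirConv e f) T q := by
  obtain ⟨q₁, hq₁⟩ := hpoly T₁
  obtain ⟨q₂, hq₂⟩ := hpoly T₂
  obtain ⟨q₃, hq₃⟩ := hpoly T₃
  obtain ⟨r₁, hr₁⟩ := exists_evalP_eq_integral e q₁ (C 0) α
  obtain ⟨r₂, hr₂⟩ := exists_evalP_eq_integral e q₂ α β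
  obtain ⟨r₃, hr₃⟩ := exists_evalP_eq_integral e q₃ β (C 1)
  refine ⟨r₁ + r₂ + r₃, fun p hp ↦ ?_⟩
  obtain ⟨hα, hαβ, hβ⟩ := h₀ p hp
  have hint (r s : ℝ) :
      IntervalIntegrable (fun t : ℝ ↦ f (p - t • e)) MeasureTheory.volume r s :=
    Continuous.intervalIntegrable (by fun_prop) r s
  have hC (r : ℝ) : evalP (C r) p = r := by simp [evalP]
  have hadd : evalP (r₁ + r₂ + r₃) p = evalP r₁ p + evalP r₂ p + evalP r₃ p := by simp [evalP]
  rw [hadd, hr₁, hr₂, hr₃, hC, hC, dirConv,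
    ← intervalIntegral.integral_add_adjacent_intervals (hint 0 (evalP β p)) (hint _ 1),
    ← intervalIntegral.integral_add_adjacent_intervals (hint 0 (evalP α p)) (hint _ (evalP β p)),
    integral_congr_of_mem_triangle hq₁ hα (h₁ p hp),
    integral_congr_of_mem_triangle hq₂ hαβ (h₂ p hp),
    integral_congr_of_mem_triangle hq₃ hβ (h₃ p hp)]

/-- The affine polynomial `a x + b y + c`. -/
def affinePoly (a b c : ℝ) : BPoly :=
  C a * X 0 + C b * X 1 + C c

@[simp]
lemma evalP_affinePoly (a b c : ℝ) (p : Pt) :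
    evalP (affinePoly a b c) p = a * p.1 + b * p.2 + c := by
  simp [evalP, affinePoly]

lemma IsPiecewisePoly.dirConv_e₁ {f : Pt → ℝ} (hf : Continuous f) (hpoly : IsPiecewisePoly f) :
    IsPiecewisePoly (dirConv (latticeEmb (1, 0)) f) := by
  rintro ⟨⟨m, n⟩, _ | _⟩
  on_goal 1 =>
    refine hpoly.exists_isPiece_dirConv hf ⟨(m, n), false⟩ ⟨(m, n), true⟩ ⟨(m - 1, n), false⟩
      (affinePoly 1 (-1) (n - m)) (affinePoly 1 0 (-m)) ?_ ?_ ?_ ?_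
  on_goal 5 =>
    refine hpoly.exists_isPiece_dirConv hf ⟨(m, n), true⟩ ⟨(m - 1, n), false⟩ ⟨(m - 1, n), true⟩
      (affinePoly 1 0 (-m)) (affinePoly 1 (-1) (n - m + 1)) ?_ ?_ ?_ ?_
  all_goals
    simp only [Tri.mem_toSet_lower, Tri.mem_toSet_upper, evalP_affinePoly, mem_Ioo,
      fst_sub_smul_latticeEmb, snd_sub_smul_latticeEmb]
    push_cast
    intros
    casesm* _ ∧ _
    refine ⟨?_, ?_, ?_⟩ <;> linarith

lemma IsPiecewisePoly.dirConv_e₂ {f : Pt → ℝ} (hf : Continuous f) (hpoly : IsPiecewisePoly f) :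
    IsPiecewisePoly (dirConv (latticeEmb (0, 1)) f) := by
  rintro ⟨⟨m, n⟩, _ | _⟩
  on_goal 1 =>
    refine hpoly.exists_isPiece_dirConv hf ⟨(m, n), false⟩ ⟨(m, n - 1), true⟩ ⟨(m, n - 1), false⟩
      (affinePoly 0 1 (-n)) (affinePoly (-1) 1 (m - n + 1)) ?_ ?_ ?_ ?_
  on_goal 5 =>
    refine hpoly.exists_isPiece_dirConv hf ⟨(m, n), true⟩ ⟨(m, n), false⟩ ⟨(m, n - 1), true⟩
      (affinePoly (-1) 1 (m - n)) (affinePoly 0 1 (-n)) ?_ ?_ ?_ ?_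
  all_goals
    simp only [Tri.mem_toSet_lower, Tri.mem_toSet_upper, evalP_affinePoly, mem_Ioo,
      fst_sub_smul_latticeEmb, snd_sub_smul_latticeEmb]
    push_cast
    intros
    casesm* _ ∧ _
    refine ⟨?_, ?_, ?_⟩ <;> linarith

lemma IsPiecewisePoly.dirConv_e₃ {f : Pt → ℝ} (hf : Continuous f) (hpoly : IsPiecewisePoly f) :
    IsPiecewisePoly (dirConv (latticeEmb (1, 1)) f) := by
  rintro ⟨⟨m, n⟩, _ | _⟩
  on_goal 1 =>
    refine hpoly.exists_isPiece_dirConv hf ⟨(m, n), false⟩ ⟨(m, n - 1), true⟩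
      ⟨(m - 1, n - 1), false⟩ (affinePoly 0 1 (-n)) (affinePoly 1 0 (-m)) ?_ ?_ ?_ ?_
  on_goal 5 =>
    refine hpoly.exists_isPiece_dirConv hf ⟨(m, n), true⟩ ⟨(m - 1, n), false⟩
      ⟨(m - 1, n - 1), true⟩ (affinePoly 1 0 (-m)) (affinePoly 0 1 (-n)) ?_ ?_ ?_ ?_
  all_goals
    simp only [Tri.mem_toSet_lower, Tri.mem_toSet_upper, evalP_affinePoly, mem_Ioo,
      fst_sub_smul_latticeEmb, snd_sub_smul_latticeEmb]
    push_cast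
    intros
    casesm* _ ∧ _
    refine ⟨?_, ?_, ?_⟩ <;> linarith

end PiecewisePolynomials

section BoxSplines

/-- `f` is the type-I box spline `B_(a + 1, b + 1, c + 1)`, obtained from the Courant hat function
by directional convolutions in an arbitrary order. -/
inductive IsBoxSpline : ℕ → ℕ → ℕ → (Pt → ℝ) → Prop
  | hat : IsBoxSpline 0 0 0 hat
  | conv₁ {a b c f} : IsBoxSpline a b c f → IsBoxSpline (a + 1) b c (dirConv (latticeEmb (1, 0)) f)
  | conv₂ {a b c f} : IsBoxSpline a b c f → IsBoxSpline a (b + 1) c (dirConv (latticeEmb (0, 1)) f)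
  | conv₃ {a b c f} : IsBoxSpline a b c f → IsBoxSpline a b (c + 1) (dirConv (latticeEmb (1, 1)) f)

lemma isBoxSpline_boxN (a b c : ℕ) : IsBoxSpline a b c (boxN (a + 1) (b + 1) (c + 1)) := by
  induction a with
  | zero =>
    induction b with
    | zero =>
      induction c with
      | zero =>
        convert IsBoxSpline.hat
        ext p
        rw [boxN]
      | succ c ih =>
        convert ih.conv₃
        ext p
        rw [boxN, dirConv]
        refine intervalIntegral.integral_congr fun t _ ↦ congrArg _ ?_
        ext <;> simp
    | succ b ih =>
      convert ih.conv₂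
      ext p
      rw [boxN, dirConv]
      refine intervalIntegral.integral_congr fun t _ ↦ congrArg _ ?_
      ext <;> simp
  | succ a ih =>
    convert ih.conv₁
    ext p
    rw [boxN, dirConv]
    refine intervalIntegral.integral_congr fun t _ ↦ congrArg _ ?_
    ext <;> simp

lemma continuous_hat : Continuous hat := by
  unfold hat
  fun_prop

lemma mem_hexagon_of_hat_ne_zero {p : Pt} (h : hat p ≠ 0) : p ∈ hexagon 1 1 1 := by
  unfold hat at h
  simp only [hexagon, mem_ofPred_eq, mem_Ioo]
  push_cast
  grind

lemma isPiecewisePoly_hat : IsPiecewisePoly hat := by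
  intro T
  by_cases hzero : ∀ p ∈ T.toSet, hat p = 0
  · exact ⟨0, fun p hp ↦ by simp [hzero p hp, evalP]⟩
  push Not at hzero
  obtain ⟨p, hp, hne⟩ := hzero
  have hmem : 0 ∈ window 1 1 1 T := by
    refine mem_window_of_sub_mem_hexagon hp ?_
    rw [map_zero, sub_zero]
    exact mem_hexagon_of_hat_ne_zero hne
  obtain ⟨⟨m, n⟩, up⟩ := T
  simp only [mem_window, Prod.fst_zero, Prod.snd_zero] at hmem
  have hm : m = 0 ∨ m = 1 := by omega
  have hn : n = 0 ∨ n = 1 := by omega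
  have affine_of_eq (a b c : ℝ) (h : ∀ p ∈ (⟨(m, n), up⟩ : Tri).toSet,
      hat p = a * p.1 + b * p.2 + c) : ∃ q, IsPiece hat ⟨(m, n), up⟩ q :=
    ⟨affinePoly a b c, fun p hp ↦ by rw [h p hp, evalP_affinePoly]⟩
  rcases hm with rfl | rfl <;> rcases hn with rfl | rfl <;> cases up <;>
    simp only [Tri.mem_toSet_lower, Tri.mem_toSet_upper, hat] at affine_of_eq <;>
    push_cast at affine_of_eq
  · exact affine_of_eq 0 1 0 (by grind)
  · exact affine_of_eq 1 0 0 (by grind)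
  · exact affine_of_eq 1 (-1) 1 (by grind)
  · simp [Tri.diag] at hmem
  · simp [Tri.diag] at hmem
  · exact affine_of_eq (-1) 1 1 (by grind)
  · exact affine_of_eq (-1) 0 2 (by grind)
  · exact affine_of_eq 0 (-1) 2 (by grind)

lemma isLocalBasis_hat (T : Tri) : IsLocalBasis latticeEmb T.toSet hat (window 1 1 1 T) := by
  refine ⟨fun w hw p hp ↦ ?_, ?_⟩
  · by_contra hne
    exact hw (mem_window_of_sub_mem_hexagon hp (mem_hexagon_of_hat_ne_zero hne))
  refine linearIndepOn_of_nodal continuous_hat (x := fun w ↦ latticeEmb (w + (1, 1))) ?_ ?_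
  · intro w hw
    rw [mem_window] at hw
    refine Tri.mem_closure_toSet ?_ ?_ ?_ <;>
      simp only [latticeEmb_apply, mem_Icc, Prod.fst_add, Prod.snd_add] <;> norm_cast <;> omega
  · intro w _ w' _
    rw [← map_sub, latticeEmb_apply]
    split_ifs with h
    · subst h
      norm_num [hat]
    · by_contra hne
      obtain ⟨⟨hlo₁, hhi₁⟩, ⟨hlo₂, hhi₂⟩, -⟩ := mem_hexagon_of_hat_ne_zero hne
      simp only [Prod.fst_sub, Prod.fst_add, Prod.snd_sub, Prod.snd_add] at hlo₁ hhi₁ hlo₂ hhi₂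
      norm_cast at hlo₁ hhi₁ hlo₂ hhi₂
      exact h (Prod.ext (by omega) (by omega))

lemma hasLineSum_hat_e₁ : HasLineSum (latticeEmb (1, 0)) hat fun p ↦ cardBSpline 0 p.2 := by
  refine hasLineSum_of_two_terms continuous_fst (by simp)
    (fun p hp ↦ by simpa [one_add_one_eq_two] using (mem_hexagon_of_hat_ne_zero hp).1)
    (by simp) fun p hp₀ hp₁ ↦ ?_
  simp only [hat, cardBSpline, latticeEmb_apply, Prod.fst_add, Prod.snd_add]
  push_cast
  grind

lemma hasLineSum_hat_e₂ : HasLineSum (latticeEmb (0, 1)) hat fun p ↦ cardBSpline 0 p.1 := by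
  refine hasLineSum_of_two_terms continuous_snd (by simp)
    (fun p hp ↦ by simpa [one_add_one_eq_two] using (mem_hexagon_of_hat_ne_zero hp).2.1)
    (by simp) fun p hp₀ hp₁ ↦ ?_
  simp only [hat, cardBSpline, latticeEmb_apply, Prod.fst_add, Prod.snd_add]
  push_cast
  grind

lemma hasLineSum_hat_e₃ :
    HasLineSum (latticeEmb (1, 1)) hat fun p ↦ cardBSpline 0 (p.1 - p.2 + 1) := by
  refine hasLineSum_of_two_terms continuous_fst (by simp)
    (fun p hp ↦ by simpa [one_add_one_eq_two] using (mem_hexagon_of_hat_ne_zero hp).1)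
    (by simp) fun p hp₀ hp₁ ↦ ?_
  simp only [hat, cardBSpline, latticeEmb_apply, Prod.fst_add, Prod.snd_add]
  push_cast
  grind

namespace IsBoxSpline

variable {a b c : ℕ} {f : Pt → ℝ}

lemma continuous (h : IsBoxSpline a b c f) : Continuous f := by
  induction h with
  | hat => exact continuous_hat
  | conv₁ _ ih | conv₂ _ ih | conv₃ _ ih => exact continuous_dirConv _ ih

lemma isPiecewisePoly (h : IsBoxSpline a b c f) : IsPiecewisePoly f := by
  induction h with
  | hat => exact isPiecewisePoly_hat
  | conv₁ h ih => exact ih.dirConv_e₁ h.continuous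
  | conv₂ h ih => exact ih.dirConv_e₂ h.continuous
  | conv₃ h ih => exact ih.dirConv_e₃ h.continuous

lemma mem_hexagon_of_ne_zero (h : IsBoxSpline a b c f) {p : Pt} (hp : f p ≠ 0) :
    p ∈ hexagon (a + 1) (b + 1) (c + 1) := by
  induction h generalizing p with
  | hat => exact mem_hexagon_of_hat_ne_zero hp
  | conv₁ _ ih | conv₂ _ ih | conv₃ _ ih =>
    obtain ⟨t, ⟨ht₀, ht₁⟩, hne⟩ := exists_ne_zero_of_dirConv_ne_zero hp
    have hmem := ih hne
    simp only [hexagon, mem_ofPred_eq, mem_Ioo, fst_sub_smul_latticeEmb,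
      snd_sub_smul_latticeEmb] at hmem ⊢
    push_cast at hmem ⊢
    grind

lemma eq_zero_of_notMem_window (h : IsBoxSpline a b c f) {T : Tri} (w : ℤ × ℤ)
    (hw : w ∉ window (a + 1) (b + 1) (c + 1) T) (p : Pt) (hp : p ∈ T.toSet) :
    f (p - latticeEmb w) = 0 := by
  by_contra hne
  exact hw (mem_window_of_sub_mem_hexagon hp (h.mem_hexagon_of_ne_zero hne))

lemma hasLineSum_e₁ (h : IsBoxSpline a b c f) :
    HasLineSum (latticeEmb (1, 0)) f fun p ↦ cardBSpline (b + c) p.2 := by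
  induction h with
  | hat => exact hasLineSum_hat_e₁
  | conv₁ h ih =>
    have hsum := ih.dirConv h.continuous (latticeEmb (1, 0))
    rwa [dirConv_comp (e' := (0 : ℝ)) (by simp), dirConv_zero] at hsum
  | @conv₂ a b c f h ih =>
    have hsum := ih.dirConv h.continuous (latticeEmb (0, 1))
    rwa [dirConv_comp (e' := (1 : ℝ)) (by simp), ← cardBSpline_succ, add_right_comm] at hsum
  | @conv₃ a b c f h ih =>
    have hsum := ih.dirConv h.continuous (latticeEmb (1, 1))
    rwa [dirConv_comp (e' := (1 : ℝ)) (by simp), ← cardBSpline_succ, add_assoc] at hsum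

lemma hasLineSum_e₂ (h : IsBoxSpline a b c f) :
    HasLineSum (latticeEmb (0, 1)) f fun p ↦ cardBSpline (a + c) p.1 := by
  induction h with
  | hat => exact hasLineSum_hat_e₂
  | @conv₁ a b c f h ih =>
    have hsum := ih.dirConv h.continuous (latticeEmb (1, 0))
    rwa [dirConv_comp (e' := (1 : ℝ)) (by simp), ← cardBSpline_succ, add_right_comm] at hsum
  | conv₂ h ih =>
    have hsum := ih.dirConv h.continuous (latticeEmb (0, 1))
    rwa [dirConv_comp (e' := (0 : ℝ)) (by simp), dirConv_zero] at hsum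
  | @conv₃ a b c f h ih =>
    have hsum := ih.dirConv h.continuous (latticeEmb (1, 1))
    rwa [dirConv_comp (e' := (1 : ℝ)) (by simp), ← cardBSpline_succ, add_assoc] at hsum

lemma hasLineSum_e₃ (h : IsBoxSpline a b c f) :
    HasLineSum (latticeEmb (1, 1)) f fun p ↦ cardBSpline (a + b) (p.1 - p.2 + (b + 1)) := by
  induction h with
  | hat => simpa using hasLineSum_hat_e₃
  | @conv₁ a b c f h ih =>
    have hsum := ih.dirConv h.continuous (latticeEmb (1, 0))
    have hslope (p : Pt) (t : ℝ) : (p - t • latticeEmb (1, 0)).1 -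
        (p - t • latticeEmb (1, 0)).2 + (b + 1) = p.1 - p.2 + (b + 1) - t • 1 := by
      rw [fst_sub_smul_latticeEmb, snd_sub_smul_latticeEmb, smul_eq_mul]
      push_cast
      ring
    rwa [dirConv_comp (φ := fun p : Pt ↦ p.1 - p.2 + (b + 1)) hslope, ← cardBSpline_succ,
      add_right_comm] at hsum
  | @conv₂ a b c f h ih =>
    have hsum := ih.dirConv h.continuous (latticeEmb (0, 1))
    have hslope (p : Pt) (t : ℝ) : (p - t • latticeEmb (0, 1)).1 -
        (p - t • latticeEmb (0, 1)).2 + (b + 1) = p.1 - p.2 + (b + 1) - t • (-1) := by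
      rw [fst_sub_smul_latticeEmb, snd_sub_smul_latticeEmb, smul_eq_mul]
      push_cast
      ring
    rw [dirConv_comp (φ := fun p : Pt ↦ p.1 - p.2 + (b + 1)) hslope] at hsum
    simp only [dirConv_neg, ← cardBSpline_succ, add_assoc] at hsum
    simpa only [Nat.cast_add_one, add_assoc] using hsum
  | conv₃ h ih =>
    have hsum := ih.dirConv h.continuous (latticeEmb (1, 1))
    rwa [dirConv_comp (φ := fun p : Pt ↦ p.1 - p.2 + (_ + 1)) (e' := (0 : ℝ))
      (fun p t ↦ by simp), dirConv_zero] at hsum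

lemma isLocalBasis_dirConv_e₁ (h : IsBoxSpline a b c f) {T : Tri}
    (hf : IsLocalBasis latticeEmb T.toSet f (window (a + 1) (b + 1) (c + 1) T)) :
    IsLocalBasis latticeEmb T.toSet (dirConv (latticeEmb (1, 0)) f)
      (window (a + 2) (b + 1) (c + 1) T) := by
  refine hf.dirConv (l := AddMonoidHom.snd ℤ ℤ)
    (G := fun k p ↦ cardBSpline (b + c) (p.2 - Int.castAddHom ℝ k)) T.isOpen_toSet h.continuous
    ?_ (smul_left_injective ℤ (by simp)) mem_window_iff_e₁ (fun _ hw j ↦ add_nsmul_mem_window hw j)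
    h.conv₁.eq_zero_of_notMem_window
    h.conv₁.hasLineSum_e₁ (fun _ _ ↦ rfl) ?_
  · ext ⟨i, j⟩
    simp [AddMonoidHom.mem_ker, -AddMonoidHom.ker_snd, -AddMonoidHom.ker_fst,
      AddSubgroup.mem_zmultiples_iff, eq_comm]
  · refine ((isLocalBasis_cardBSpline (b + c) T.v.2).linearIndepOn_comp
      T.Ioo_subset_image_snd).mono ?_
    intro k hk
    obtain ⟨w, hw, rfl⟩ := Finset.mem_image.1 hk
    rw [mem_window] at hw
    simp only [AddMonoidHom.coe_snd, Finset.coe_Ioc, mem_Ioc]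
    push_cast at hw ⊢
    omega

lemma isLocalBasis_dirConv_e₂ (h : IsBoxSpline a b c f) {T : Tri}
    (hf : IsLocalBasis latticeEmb T.toSet f (window (a + 1) (b + 1) (c + 1) T)) :
    IsLocalBasis latticeEmb T.toSet (dirConv (latticeEmb (0, 1)) f)
      (window (a + 1) (b + 2) (c + 1) T) := by
  refine hf.dirConv (l := AddMonoidHom.fst ℤ ℤ)
    (G := fun k p ↦ cardBSpline (a + c) (p.1 - Int.castAddHom ℝ k)) T.isOpen_toSet h.continuous
    ?_ (smul_left_injective ℤ (by simp)) mem_window_iff_e₂ (fun _ hw j ↦ add_nsmul_mem_window hw j)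
    h.conv₂.eq_zero_of_notMem_window
    h.conv₂.hasLineSum_e₂ (fun _ _ ↦ rfl) ?_
  · ext ⟨i, j⟩
    simp [AddMonoidHom.mem_ker, -AddMonoidHom.ker_snd, -AddMonoidHom.ker_fst,
      AddSubgroup.mem_zmultiples_iff, eq_comm]
  · refine ((isLocalBasis_cardBSpline (a + c) T.v.1).linearIndepOn_comp
      T.Ioo_subset_image_fst).mono ?_
    intro k hk
    obtain ⟨w, hw, rfl⟩ := Finset.mem_image.1 hk
    rw [mem_window] at hw
    simp only [AddMonoidHom.coe_fst, Finset.coe_Ioc, mem_Ioc]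
    push_cast at hw ⊢
    omega

lemma isLocalBasis_dirConv_e₃ (h : IsBoxSpline a b c f) {T : Tri}
    (hf : IsLocalBasis latticeEmb T.toSet f (window (a + 1) (b + 1) (c + 1) T)) :
    IsLocalBasis latticeEmb T.toSet (dirConv (latticeEmb (1, 1)) f)
      (window (a + 1) (b + 1) (c + 2) T) := by
  refine hf.dirConv (l := AddMonoidHom.fst ℤ ℤ - AddMonoidHom.snd ℤ ℤ)
    (G := fun k p ↦ cardBSpline (a + b) (p.1 - p.2 + (b + 1) - Int.castAddHom ℝ k))
    T.isOpen_toSet h.continuous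
    ?_ (smul_left_injective ℤ (by simp)) mem_window_iff_e₃ (fun _ hw j ↦ add_nsmul_mem_window hw j)
    h.conv₃.eq_zero_of_notMem_window
    h.conv₃.hasLineSum_e₃ ?_ ?_
  · ext ⟨i, j⟩
    simp [AddSubgroup.mem_zmultiples_iff, sub_eq_zero, eq_comm]
  · intro p w
    congr 1
    simp only [latticeEmb_apply, Prod.fst_sub, Prod.snd_sub, AddMonoidHom.sub_apply,
      AddMonoidHom.coe_fst, AddMonoidHom.coe_snd, Int.coe_castAddHom]
    push_cast
    ring
  · have himage : Ioo ((T.diag + (b + 1) : ℤ) : ℝ) ((T.diag + (b + 1) : ℤ) + 1) ⊆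
        (fun p : Pt ↦ p.1 - p.2 + (b + 1)) '' T.toSet := by
      rintro z ⟨hlo, hhi⟩
      push_cast at hlo hhi
      obtain ⟨p, hp, hpz⟩ := T.Ioo_subset_image_sub (a := z - (b + 1)) ⟨by linarith, by linarith⟩
      exact ⟨p, hp, eq_sub_iff_add_eq.1 hpz⟩
    refine ((isLocalBasis_cardBSpline (a + b) _).linearIndepOn_comp himage).mono ?_
    intro k hk
    obtain ⟨w, hw, rfl⟩ := Finset.mem_image.1 hk
    rw [mem_window] at hw
    simp only [AddMonoidHom.sub_apply, AddMonoidHom.coe_fst, AddMonoidHom.coe_snd,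
      Finset.coe_Ioc, mem_Ioc]
    push_cast at hw ⊢
    omega

theorem isLocalBasis (h : IsBoxSpline a b c f) (T : Tri) :
    IsLocalBasis latticeEmb T.toSet f (window (a + 1) (b + 1) (c + 1) T) := by
  induction h with
  | hat => exact isLocalBasis_hat T
  | conv₁ h ih => exact h.isLocalBasis_dirConv_e₁ ih
  | conv₂ h ih => exact h.isLocalBasis_dirConv_e₂ ih
  | conv₃ h ih => exact h.isLocalBasis_dirConv_e₃ ih

end IsBoxSpline

end BoxSplines

section LocalSpaces

/-- Restriction of bivariate polynomials to functions on `Ω`. -/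
def polyRestrict (Ω : Set Pt) : BPoly →ₗ[ℝ] (Ω → ℝ) where
  toFun q := Ω.domRestrict (evalP q)
  map_add' q r := by
    ext p
    simp [evalP]
  map_smul' a q := by
    ext p
    simp [evalP]

lemma polyRestrict_injective {Ω : Set Pt} (hΩ : IsOpen Ω) (hne : Ω.Nonempty) :
    Injective (polyRestrict Ω) := by
  obtain ⟨⟨x, y⟩, hxy⟩ := hne
  obtain ⟨U, V, hU, hV, hx, hy, hUV⟩ := isOpen_prod_iff.1 hΩ x y hxy
  intro q r hqr
  refine MvPolynomial.funext_set ![U, V] (fun i ↦ ?_) fun z hz ↦ ?_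
  · fin_cases i
    · exact infinite_of_mem_nhds x (hU.mem_nhds hx)
    · exact infinite_of_mem_nhds y (hV.mem_nhds hy)
  · have hmem : (z 0, z 1) ∈ Ω := hUV ⟨hz 0 trivial, hz 1 trivial⟩
    have heq : evalP q (z 0, z 1) = evalP r (z 0, z 1) := congrFun hqr ⟨_, hmem⟩
    have hz_eq : ![z 0, z 1] = z := by
      ext i
      fin_cases i <;> rfl
    rwa [evalP, evalP, hz_eq] at heq

lemma VSpace_eq_comap (n₁ n₂ n₃ : ℕ) (T : Tri) :
    VSpace n₁ n₂ n₃ T =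
      (Submodule.span ℝ ((fun w ↦ T.toSet.domRestrict (trBox n₁ n₂ n₃ w)) ''
        activeSet n₁ n₂ n₃ T)).comap (polyRestrict T.toSet) := by
  ext q
  rw [SetLike.mem_coe, Submodule.mem_comap, Finsupp.mem_span_image_iff_linearCombination]
  refine exists_congr fun c ↦ and_congr Iff.rfl ?_
  rw [funext_iff, Subtype.forall]
  refine forall₂_congr fun p hp ↦ ?_
  rw [Finsupp.linearCombination_apply, Finsupp.sum, Finsupp.sum, Finset.sum_apply]
  exact eq_comm

lemma finrank_comap_of_le_range {R V W : Type*} [Ring R] [AddCommGroup V] [Module R V]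
    [AddCommGroup W] [Module R W] {ρ : V →ₗ[R] W} (hρ : Injective ρ) {S : Submodule R W}
    (hS : S ≤ LinearMap.range ρ) : Module.finrank R (S.comap ρ) = Module.finrank R S := by
  rw [(Submodule.equivMapOfInjective ρ hρ _).finrank_eq, Submodule.map_comap_eq_of_le hS]

lemma activeSet_eq_window (a b c : ℕ) (T : Tri) :
    activeSet (a + 1) (b + 1) (c + 1) T = window (a + 1) (b + 1) (c + 1) T := by
  ext w
  exact (((isBoxSpline_boxN a b c).isLocalBasis T).mem_iff w).symm

lemma span_trBox_le_range (a b c : ℕ) (T : Tri) (s : Set (ℤ × ℤ)) :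
    Submodule.span ℝ ((fun w ↦ T.toSet.domRestrict (trBox (a + 1) (b + 1) (c + 1) w)) '' s) ≤
      LinearMap.range (polyRestrict T.toSet) := by
  rw [Submodule.span_le]
  rintro _ ⟨w, -, rfl⟩
  obtain ⟨q, hq⟩ := (isBoxSpline_boxN a b c).isPiecewisePoly.translate w T
  exact ⟨q, funext fun p ↦ (hq p.2).symm⟩

lemma finrank_span_trBox (a b c : ℕ) (T : Tri) :
    Module.finrank ℝ (Submodule.span ℝ
      ((fun w ↦ T.toSet.domRestrict (trBox (a + 1) (b + 1) (c + 1) w)) ''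
        activeSet (a + 1) (b + 1) (c + 1) T)) = (window (a + 1) (b + 1) (c + 1) T).card := by
  have hli := ((isBoxSpline_boxN a b c).isLocalBasis T).linearIndepOn
  rw [activeSet_eq_window, image_eq_range]
  exact (finrank_span_eq_card hli).trans (Fintype.card_coe _)

end LocalSpaces

/-- The local polynomial space `V_n` spanned by the
restrictions to a triangle of the active box spline translates has dimension
`n₁n₂ + n₁n₃ + n₂n₃`. -/
theorem statement10 (n₁ n₂ n₃ : ℕ) (h₁ : 1 ≤ n₁) (h₂ : 1 ≤ n₂) (h₃ : 1 ≤ n₃)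
    (T : Tri) :
    Module.finrank ℝ (Submodule.span ℝ (VSpace n₁ n₂ n₃ T)) =
      n₁ * n₂ + n₁ * n₃ + n₂ * n₃ := by
  obtain ⟨a, rfl⟩ := Nat.exists_eq_add_of_le' h₁
  obtain ⟨b, rfl⟩ := Nat.exists_eq_add_of_le' h₂
  obtain ⟨c, rfl⟩ := Nat.exists_eq_add_of_le' h₃
  have hinj := polyRestrict_injective T.isOpen_toSet T.nonempty_toSet
  rw [VSpace_eq_comap, Submodule.span_eq,
    finrank_comap_of_le_range hinj (span_trBox_le_range a b c T _), finrank_span_trBox,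
    card_window]

end
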